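/- arXiv:2206.14466 — 8 statements merged into one kernel-verified Lean document; each statement's English description precedes it below -/
import Mathlib

section
/- Perfect hiding of the Pedersen commitment: if h ≠ 0 and h generates G (i.e., for every y ∈ G there exists r ∈ ZMod p with r • h = y), then for every fixed value x ∈ ZMod p the map sending a mask r ∈ ZMod p to the commitment Cm(x, r) is a bijection from ZMod p onto G; in particular the commitment of any value under a uniformly random mask is uniformly distributed on G, independently of x. -/
/-- Pedersen commitment: `Cm g h x r = x • g + r • h`. -/
def Cm (p : ℕ) {G : Type*} [AddCommGroup G] [Module (ZMod p) G]
    (g h : G) (x r : ZMod p) : G :=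
  x • g + r • h

theorem pedersen_perfect_hiding_general {R M : Type*} [Ring R] [IsCancelMulZero R]
    [AddCommGroup M] [Module R M] [Module.IsTorsionFree R M] (g h : M) (hh : h ≠ 0)
    (hgen : ∀ y : M, ∃ r : R, r • h = y) (x : R) :
    Function.Bijective (fun r : R => x • g + r • h) := by
  have smul_bijective : Function.Bijective (fun r : R => r • h) :=
    ⟨smul_left_injective R hh, hgen⟩
  exact (AddGroup.addLeft_bijective (x • g)).comp smul_bijective

/-- Perfect hiding of the Pedersen commitment: if `h` is a nonzero generator of `G`,
then for every fixed value `x` the map `r ↦ Cm x r` is a bijection from `ZMod p` onto `G`. -/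
theorem pedersen_perfect_hiding (p : ℕ) [Fact p.Prime] {G : Type*} [AddCommGroup G]
    [Module (ZMod p) G] (g h : G) (hh : h ≠ 0)
    (hgen : ∀ y : G, ∃ r : ZMod p, r • h = y) :
    ∀ x : ZMod p, Function.Bijective (fun r : ZMod p => Cm p g h x r) :=
  pedersen_perfect_hiding_general g h hh hgen
end

section
/- Binding of the Pedersen commitment reduces to the discrete logarithm: if two openings collide, i.e., Cm(x₁, r₁) = Cm(x₂, r₂) with r₁ ≠ r₂, then the discrete logarithm of h with respect to g is revealed: h = ((x₁ − x₂) / (r₂ − r₁)) • g. -/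
theorem smul_add_smul_eq_smul_add_smul_iff_sub_smul_eq {R M : Type*} [Ring R] [AddCommGroup M]
    [Module R M] {g h : M} {x₁ x₂ r₁ r₂ : R} :
    x₁ • g + r₁ • h = x₂ • g + r₂ • h ↔ (r₂ - r₁) • h = (x₁ - x₂) • g := by
  rw [sub_smul, sub_smul, eq_comm (a := r₂ • h - r₁ • h), sub_eq_sub_iff_add_eq_add,
    add_comm (r₂ • h)]

theorem pedersen_binding_dlog_general {R M : Type*} [Ring R] [AddCommGroup M] [Module R M]
    {g h : M} {x₁ x₂ r₁ r₂ : R} (hcollide : x₁ • g + r₁ • h = x₂ • g + r₂ • h)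
    (hr : IsUnit (r₂ - r₁)) :
    h = (Ring.inverse (r₂ - r₁) * (x₁ - x₂)) • g := by
  have hsmul : (r₂ - r₁) • h = (x₁ - x₂) • g :=
    smul_add_smul_eq_smul_add_smul_iff_sub_smul_eq.mp hcollide
  calc
    h = (Ring.inverse (r₂ - r₁) * (r₂ - r₁)) • h := by
      rw [Ring.inverse_mul_cancel _ hr, one_smul]
    _ = (Ring.inverse (r₂ - r₁) * (x₁ - x₂)) • g := by
      rw [mul_smul, hsmul, ← mul_smul]

/-- Binding reduces to discrete log: colliding openings with distinct masks reveal the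
discrete logarithm of `h` with respect to `g`. -/
theorem pedersen_binding_dlog (p : ℕ) [Fact p.Prime] {G : Type*} [AddCommGroup G]
    [Module (ZMod p) G] (g h : G) (x₁ x₂ r₁ r₂ : ZMod p)
    (hcollide : Cm p g h x₁ r₁ = Cm p g h x₂ r₂) (hr : r₁ ≠ r₂) :
    h = ((x₁ - x₂) / (r₂ - r₁)) • g := by
  rw [div_eq_inv_mul, ← Ring.inverse_eq_inv]
  exact pedersen_binding_dlog_general hcollide (sub_ne_zero.mpr hr.symm).isUnit
end

section
/- Completeness of the zero-knowledge proof of non-negativity (zkpNN): let m ≥ 1, let b : Fin m → ZMod p be the bit values and ρ : Fin m → ZMod p their masks, and suppose the committed value satisfies the binary decomposition x = Σ_{i=1}^{m} b_i · 2^{i−1} in ZMod p. Let C = Cm(x, r), B_i = Cm(b_i, ρ_i) for each i, A = Cm(0, r') = r' • h, and for a challenge β ∈ ZMod p let the response be z_r = r' + β·(Σ_{i=1}^{m} ρ_i · 2^{i−1} − r). Then the verifier's check passes: z_r • h = A − β • C + Σ_{i=1}^{m} (β · 2^{i−1}) • B_i. -/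
/-!
Commitments are linear in the pair (value, mask), so the right-hand side of the verifier's check is
itself a commitment. The decomposition of `x` makes its value vanish, while its mask is exactly the
prover's response.
-/

section Pedersen

variable {R G ι : Type*}

/-- The Pedersen commitment over an arbitrary coefficient semiring, as a linear map from pairs
(value, mask) to the commitment module. -/
def pedersen [Semiring R] [AddCommMonoid G] [Module R G] (g h : G) : R × R →ₗ[R] G :=
  (LinearMap.toSpanSingleton R G g).coprod (LinearMap.toSpanSingleton R G h)

theorem pedersen_apply [Semiring R] [AddCommMonoid G] [Module R G] (g h : G) (x r : R) :
    pedersen g h (x, r) = x • g + r • h := by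
  simp only [pedersen, LinearMap.coprod_apply, LinearMap.toSpanSingleton_apply]

theorem pedersen_zero_left [Semiring R] [AddCommMonoid G] [Module R G] (g h : G) (r : R) :
    pedersen g h (0, r) = r • h := by
  rw [pedersen_apply, zero_smul, zero_add]

theorem Cm_eq_pedersen (p : ℕ) [AddCommGroup G] [Module (ZMod p) G] (g h : G) (x r : ZMod p) :
    Cm p g h x r = pedersen g h (x, r) :=
  (pedersen_apply g h x r).symm

theorem sum_smul_pedersen [Semiring R] [AddCommMonoid G] [Module R G] (g h : G)
    (s : Finset ι) (w b ρ : ι → R) :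
    ∑ i ∈ s, w i • pedersen g h (b i, ρ i) =
      pedersen g h (∑ i ∈ s, w i * b i, ∑ i ∈ s, w i * ρ i) := by
  simp only [← map_smul, ← map_sum, Prod.smul_mk, smul_eq_mul, prod_mk_sum]

theorem zkpNN_complete_general [Ring R] [AddCommGroup G] [Module R G] (g h : G)
    (s : Finset ι) (w b ρ : ι → R) (x r r' β : R) (hx : x = ∑ i ∈ s, w i * b i) :
    (r' + β * (∑ i ∈ s, w i * ρ i - r)) • h =
      pedersen g h (0, r') - β • pedersen g h (x, r) +
        ∑ i ∈ s, (β * w i) • pedersen g h (b i, ρ i) := by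
  have value_eq : 0 - β * x + β * ∑ i ∈ s, w i * b i = 0 := by
    rw [← hx, zero_sub, neg_add_cancel]
  have mask_eq : r' - β * r + β * ∑ i ∈ s, w i * ρ i = r' + β * (∑ i ∈ s, w i * ρ i - r) := by
    rw [mul_sub, sub_add_eq_add_sub, add_sub_assoc]
  symm
  calc
    pedersen g h (0, r') - β • pedersen g h (x, r) +
          ∑ i ∈ s, (β * w i) • pedersen g h (b i, ρ i)
        = pedersen g h (0, r') - β • pedersen g h (x, r) +
          β • pedersen g h (∑ i ∈ s, w i * b i, ∑ i ∈ s, w i * ρ i) := by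
      simp only [mul_smul, ← Finset.smul_sum, sum_smul_pedersen]
    _ = pedersen g h (0 - β * x + β * ∑ i ∈ s, w i * b i,
          r' - β * r + β * ∑ i ∈ s, w i * ρ i) := by
      simp only [← map_smul, ← map_sub, ← map_add, Prod.smul_mk, smul_eq_mul, Prod.mk_sub_mk,
        Prod.mk_add_mk]
    _ = (r' + β * (∑ i ∈ s, w i * ρ i - r)) • h := by
      rw [value_eq, mask_eq, pedersen_zero_left]

end Pedersen

/-- Completeness of zkpNN: with the binary decomposition `x = Σ b_i · 2^(i-1)`, the honest
prover's response passes the verifier's check. -/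
theorem zkpNN_complete (p : ℕ) [Fact p.Prime] {G : Type*} [AddCommGroup G]
    [Module (ZMod p) G] (g h : G) (m : ℕ) (hm : 1 ≤ m)
    (b ρ : Fin m → ZMod p) (x r r' β : ZMod p)
    (hx : x = ∑ i : Fin m, b i * 2 ^ (i : ℕ))
    (C : G) (hC : C = Cm p g h x r)
    (B : Fin m → G) (hB : ∀ i, B i = Cm p g h (b i) (ρ i))
    (A : G) (hA : A = Cm p g h 0 r')
    (zr : ZMod p) (hzr : zr = r' + β * (∑ i : Fin m, ρ i * 2 ^ (i : ℕ) - r)) :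
    zr • h = A - β • C + ∑ i : Fin m, (β * 2 ^ (i : ℕ)) • B i := by
  simp only [mul_comm (b _), mul_comm (ρ _)] at hx hzr
  simpa only [hC, hA, hB, hzr, Cm_eq_pedersen] using
    zkpNN_complete_general g h Finset.univ (fun i : Fin m => 2 ^ (i : ℕ)) b ρ x r r' β hx
end

section
/- Knowledge extraction (soundness) for zkpCm: suppose A, C ∈ G and there are two accepting transcripts with the same first message A and distinct challenges β₁ ≠ β₂ in ZMod p, i.e., responses z'_x, z'_r, z''_x, z''_r ∈ ZMod p with z'_x • g + z'_r • h = A + β₁ • C and z''_x • g + z''_r • h = A + β₂ • C. Then the extractor recovers an opening of C: C = Cm((z'_x − z''_x)/(β₁ − β₂), (z'_r − z''_r)/(β₁ − β₂)). -/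
section SpecialSoundness

variable {R G W : Type*} [Ring R] [AddCommGroup G] [Module R G]

theorem sub_smul_eq_map_sub_of_map_eq_add_smul {F : Type*} [AddGroup W] [FunLike F W G]
    [AddMonoidHomClass F W G] (φ : F) {A C : G} {β₁ β₂ : R} {z₁ z₂ : W}
    (h₁ : φ z₁ = A + β₁ • C) (h₂ : φ z₂ = A + β₂ • C) :
    (β₁ - β₂) • C = φ (z₁ - z₂) := by
  rw [map_sub, h₁, h₂, add_sub_add_left_eq_sub, sub_smul]

/-- Here `φ` sends an opening to its commitment, and `z₁`, `z₂` are the responses to the challenges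
`β₁`, `β₂`; the Pedersen commitment is the case `φ (x, r) = x • g + r • h`. -/
theorem zkpCm_extract_general [AddCommGroup W] [Module R W] (φ : W →ₗ[R] G) {A C : G}
    {β₁ β₂ : R} (u : Rˣ) (hu : β₁ - β₂ = u) {z₁ z₂ : W}
    (h₁ : φ z₁ = A + β₁ • C) (h₂ : φ z₂ = A + β₂ • C) :
    C = φ (u⁻¹ • (z₁ - z₂)) := by
  rw [φ.map_smul_of_tower, eq_inv_smul_iff, Units.smul_def, ← hu,
    sub_smul_eq_map_sub_of_map_eq_add_smul φ h₁ h₂]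

end SpecialSoundness

theorem Cm_eq_coprod_toSpanSingleton (p : ℕ) {G : Type*} [AddCommGroup G] [Module (ZMod p) G]
    (g h : G) (x r : ZMod p) :
    Cm p g h x r = (LinearMap.toSpanSingleton (ZMod p) G g).coprod
      (LinearMap.toSpanSingleton (ZMod p) G h) (x, r) :=
  rfl

/-- Knowledge extraction (soundness) for zkpCm: two accepting transcripts with the same
first message and distinct challenges yield an opening of the commitment `C`. -/
theorem zkpCm_extract (p : ℕ) [Fact p.Prime] {G : Type*} [AddCommGroup G]
    [Module (ZMod p) G] (g h : G) (A C : G) (β₁ β₂ : ZMod p) (hβ : β₁ ≠ β₂)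
    (zx' zr' zx'' zr'' : ZMod p)
    (h1 : zx' • g + zr' • h = A + β₁ • C)
    (h2 : zx'' • g + zr'' • h = A + β₂ • C) :
    C = Cm p g h ((zx' - zx'') / (β₁ - β₂)) ((zr' - zr'') / (β₁ - β₂)) := by
  rw [Cm_eq_coprod_toSpanSingleton, div_eq_inv_mul, div_eq_inv_mul]
  exact zkpCm_extract_general _ (.mk0 _ (sub_ne_zero.mpr hβ)) rfl
    (z₁ := (zx', zr')) (z₂ := (zx'', zr'')) h1 h2
end

section
/- Knowledge extraction for zkpMbs (single index): suppose A, C ∈ G, y, z ∈ ZMod p, and there are two accepting transcripts with the same first-round data (A, z) and distinct per-index challenges β₁ ≠ β₂ in ZMod p, i.e., responses w₁, w₂ ∈ ZMod p with z • g + w₁ • h = A + β₁ • (C − y • g) and z • g + w₂ • h = A + β₂ • (C − y • g). Then C = Cm(y, (w₁ − w₂)/(β₁ − β₂)), i.e., C is a Pedersen commitment to the public set element y. -/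
theorem sub_smul_eq_sub_smul_of_add_smul_eq_add_smul {R M : Type*} [Ring R] [AddCommGroup M]
    [Module R M] {a b u v : M} {r₁ r₂ s₁ s₂ : R}
    (h₁ : a + r₁ • u = b + s₁ • v) (h₂ : a + r₂ • u = b + s₂ • v) :
    (r₁ - r₂) • u = (s₁ - s₂) • v :=
  calc
    (r₁ - r₂) • u = (a + r₁ • u) - (a + r₂ • u) := by rw [add_sub_add_left_eq_sub, sub_smul]
    _ = (b + s₁ • v) - (b + s₂ • v) := by rw [h₁, h₂]
    _ = (s₁ - s₂) • v := by rw [add_sub_add_left_eq_sub, sub_smul]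

theorem inverse_mul_smul_eq_of_smul_eq_smul {M₀ X : Type*} [MonoidWithZero M₀] [MulAction M₀ X]
    {a b : M₀} {u v : X} (ha : IsUnit a) (h : b • u = a • v) :
    (Ring.inverse a * b) • u = v := by
  rw [mul_smul, h, smul_smul, Ring.inverse_mul_cancel a ha, one_smul]

theorem zkpMbs_extract_general {R G : Type*} [Ring R] [AddCommGroup G] [Module R G]
    (g h : G) (A C : G) (y z : R) (β₁ β₂ : R) (hβ : IsUnit (β₁ - β₂)) (w₁ w₂ : R)
    (h1 : z • g + w₁ • h = A + β₁ • (C - y • g))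
    (h2 : z • g + w₂ • h = A + β₂ • (C - y • g)) :
    C = y • g + (Ring.inverse (β₁ - β₂) * (w₁ - w₂)) • h := by
  have smul_h_eq : (w₁ - w₂) • h = (β₁ - β₂) • (C - y • g) :=
    sub_smul_eq_sub_smul_of_add_smul_eq_add_smul h1 h2
  rw [inverse_mul_smul_eq_of_smul_eq_smul hβ smul_h_eq, add_sub_cancel]

/-- Knowledge extraction for zkpMbs (single index): two accepting transcripts with the same
first-round data and distinct challenges show `C` commits to the public set element `y`. -/
theorem zkpMbs_extract (p : ℕ) [Fact p.Prime] {G : Type*} [AddCommGroup G]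
    [Module (ZMod p) G] (g h : G) (A C : G) (y z : ZMod p)
    (β₁ β₂ : ZMod p) (hβ : β₁ ≠ β₂) (w₁ w₂ : ZMod p)
    (h1 : z • g + w₁ • h = A + β₁ • (C - y • g))
    (h2 : z • g + w₂ • h = A + β₂ • (C - y • g)) :
    C = Cm p g h y ((w₁ - w₂) / (β₁ - β₂)) := by
  rw [Cm, div_eq_inv_mul, ← Ring.inverse_eq_inv]
  exact zkpMbs_extract_general g h A C y z β₁ β₂ (sub_ne_zero.mpr hβ).isUnit w₁ w₂ h1 h2
end

section
/- Soundness of zkpMbs under independence of the generators: suppose g and h are independent, C = Cm(x, r) for some x, r ∈ ZMod p, and for some public set element y ∈ ZMod p and z, A there are two accepting transcripts as in the extraction, i.e., w₁, w₂ ∈ ZMod p and β₁ ≠ β₂ with z • g + w₁ • h = A + β₁ • (C − y • g) and z • g + w₂ • h = A + β₂ • (C − y • g). Then x = y; in particular, if y ranges over the elements of a public set X, the committed value x belongs to X. -/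
/-!
Subtracting the two transcripts cancels the first message `A` and the common term `z • g`, leaving
`c • (C - y • g) = w • h` with `c = β₁ - β₂` and `w = w₁ - w₂`. Hence `c • C` has the two openings
`(c * x, c * r)` and `(c * y, w)`, and the binding property forces `c * x = c * y`.
-/

section

variable {R G : Type*} [Ring R] [AddCommGroup G] [Module R G]

theorem eq_left_of_smul_add_smul_eq {g h : G} (hg : ∀ a b : R, a • g + b • h = 0 → a = 0)
    {a b a' b' : R} (hab : a • g + b • h = a' • g + b' • h) : a = a' := by
  refine sub_eq_zero.mp (hg (a - a') (b - b') ?_)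
  rw [sub_smul, sub_smul, sub_add_sub_comm, hab, sub_self]

theorem sub_smul_eq_sub_smul_of_add_smul_eq {h A D Z : G} {β₁ β₂ w₁ w₂ : R}
    (h1 : Z + w₁ • h = A + β₁ • D) (h2 : Z + w₂ • h = A + β₂ • D) :
    (β₁ - β₂) • D = (w₁ - w₂) • h :=
  calc
    (β₁ - β₂) • D = (A + β₁ • D) - (A + β₂ • D) := by rw [add_sub_add_left_eq_sub, sub_smul]
    _ = (Z + w₁ • h) - (Z + w₂ • h) := by rw [h1, h2]
    _ = (w₁ - w₂) • h := by rw [add_sub_add_left_eq_sub, sub_smul]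

theorem zkpMbs_sound_general (g h : G) (hg : ∀ a b : R, a • g + b • h = 0 → a = 0)
    (x r : R) (C : G) (hC : C = x • g + r • h)
    (y z : R) (A : G) (β₁ β₂ : R) (hβ : IsLeftRegular (β₁ - β₂)) (w₁ w₂ : R)
    (h1 : z • g + w₁ • h = A + β₁ • (C - y • g))
    (h2 : z • g + w₂ • h = A + β₂ • (C - y • g)) :
    x = y := by
  have extracted : (β₁ - β₂) • (C - y • g) = (w₁ - w₂) • h :=
    sub_smul_eq_sub_smul_of_add_smul_eq h1 h2
  have openings : ((β₁ - β₂) * x) • g + ((β₁ - β₂) * r) • h =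
      ((β₁ - β₂) * y) • g + (w₁ - w₂) • h :=
    calc
      _ = (β₁ - β₂) • C := by rw [hC, smul_add, mul_smul, mul_smul]
      _ = (β₁ - β₂) • (y • g) + (β₁ - β₂) • (C - y • g) := by rw [← smul_add, add_sub_cancel]
      _ = _ := by rw [extracted, mul_smul]
  exact hβ (eq_left_of_smul_add_smul_eq hg openings)

end

/-- Soundness of zkpMbs under independence of the generators: two accepting transcripts
with distinct challenges force the committed value to equal the public set element `y`. -/
theorem zkpMbs_sound (p : ℕ) [Fact p.Prime] {G : Type*} [AddCommGroup G]
    [Module (ZMod p) G] (g h : G)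
    (hind : ∀ a b : ZMod p, a • g + b • h = 0 → a = 0 ∧ b = 0)
    (x r : ZMod p) (C : G) (hC : C = Cm p g h x r)
    (y z : ZMod p) (A : G) (β₁ β₂ : ZMod p) (hβ : β₁ ≠ β₂) (w₁ w₂ : ZMod p)
    (h1 : z • g + w₁ • h = A + β₁ • (C - y • g))
    (h2 : z • g + w₂ • h = A + β₂ • (C - y • g)) :
    x = y :=
  zkpMbs_sound_general g h (fun a b hab => (hind a b hab).1) x r C hC y z A β₁ β₂
    (IsRegular.of_ne_zero (sub_ne_zero.mpr hβ)).left w₁ w₂ h1 h2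
end

section
/- Knowledge extraction for zkpNN: let m ≥ 1, C ∈ G, B : Fin m → G, A ∈ G, and suppose there are two accepting transcripts with the same first-round data and distinct challenges β₁ ≠ β₂ in ZMod p, i.e., responses z_r, z'_r ∈ ZMod p with z_r • h = A − β₁ • C + Σ_{i=1}^{m} (β₁ · 2^{i−1}) • B_i and z'_r • h = A − β₂ • C + Σ_{i=1}^{m} (β₂ · 2^{i−1}) • B_i. Then Σ_{i=1}^{m} 2^{i−1} • B_i − C = ((z_r − z'_r)/(β₁ − β₂)) • h. -/
/-! The verifier's check is affine in the challenge: it says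
`z • h = A + β • (∑ i, w i • B i - C)` with `w i = 2 ^ i`. Subtracting the checks for two challenges
cancels `A`, and the difference of the challenges can then be inverted. -/

section Ring

variable {R M : Type*} [Ring R] [AddCommGroup M] [Module R M]

theorem sub_smul_add_sum_mul_smul {ι : Type*} (s : Finset ι) (w : ι → R) (A C : M) (B : ι → M)
    (β : R) :
    A - β • C + ∑ i ∈ s, (β * w i) • B i = A + β • (∑ i ∈ s, w i • B i - C) := by
  simp only [mul_smul, ← Finset.smul_sum, smul_sub]
  abel

theorem sub_smul_eq_sub_smul_of_smul_eq_add_smul {A S h : M} {β₁ β₂ z₁ z₂ : R}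
    (h₁ : z₁ • h = A + β₁ • S) (h₂ : z₂ • h = A + β₂ • S) :
    (β₁ - β₂) • S = (z₁ - z₂) • h := by
  rw [sub_smul, sub_smul, h₁, h₂, add_sub_add_left_eq_sub]

end Ring

theorem zkpNN_extract_general {K V ι : Type*} [DivisionRing K] [AddCommGroup V] [Module K V]
    {s : Finset ι} {w : ι → K} {h A C : V} {B : ι → V} {β₁ β₂ z₁ z₂ : K} (hβ : β₁ ≠ β₂)
    (h₁ : z₁ • h = A - β₁ • C + ∑ i ∈ s, (β₁ * w i) • B i)
    (h₂ : z₂ • h = A - β₂ • C + ∑ i ∈ s, (β₂ * w i) • B i) :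
    ∑ i ∈ s, w i • B i - C = ((β₁ - β₂)⁻¹ * (z₁ - z₂)) • h := by
  rw [sub_smul_add_sum_mul_smul] at h₁ h₂
  rw [mul_smul, eq_inv_smul_iff₀ (sub_ne_zero.mpr hβ)]
  exact sub_smul_eq_sub_smul_of_smul_eq_add_smul h₁ h₂

/-- Knowledge extraction for zkpNN: two accepting transcripts with the same first-round
data and distinct challenges yield the relation
`Σ 2^(i-1) • B_i − C = ((z_r − z'_r)/(β₁ − β₂)) • h`. -/
theorem zkpNN_extract (p : ℕ) [Fact p.Prime] {G : Type*} [AddCommGroup G]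
    [Module (ZMod p) G] (g h : G) (m : ℕ) (hm : 1 ≤ m)
    (C A : G) (B : Fin m → G) (β₁ β₂ : ZMod p) (hβ : β₁ ≠ β₂) (zr zr' : ZMod p)
    (h1 : zr • h = A - β₁ • C + ∑ i : Fin m, (β₁ * 2 ^ (i : ℕ)) • B i)
    (h2 : zr' • h = A - β₂ • C + ∑ i : Fin m, (β₂ * 2 ^ (i : ℕ)) • B i) :
    ∑ i : Fin m, (2 ^ (i : ℕ) : ZMod p) • B i - C = ((zr - zr') / (β₁ - β₂)) • h := by
  rw [div_eq_inv_mul]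
  exact zkpNN_extract_general hβ h1 h2
end

section
/- Soundness of zkpNN under independence of the generators: suppose g and h are independent, C = Cm(x, r), and for each i ∈ Fin m, B_i = Cm((β̂_i : ZMod p), ρ_i) where each β̂_i ∈ ℕ is a bit (β̂_i = 0 or β̂_i = 1). If the extracted relation Σ_{i=1}^{m} 2^{i−1} • B_i − C = w • h holds for some w ∈ ZMod p, then x is the image in ZMod p of the natural number N = Σ_{i=1}^{m} β̂_i · 2^{i−1}, and N < 2^m; in particular the committed value is represented by a non-negative integer less than 2^m. -/
/-!
Commitments are linear in the pair (value, mask), so the weighted sum of the digit commitments is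
itself a commitment to the number `N` having those digits. The extracted relation says that it
differs from the commitment to `x` by a multiple of `h` only, and `x = N` follows by comparing
coefficients of `g`.
-/

theorem sum_smul_smul_add_smul {ι R M : Type*} [Semiring R] [AddCommMonoid M] [Module R M]
    (s : Finset ι) (c x r : ι → R) (g h : M) :
    ∑ i ∈ s, c i • (x i • g + r i • h) =
      (∑ i ∈ s, c i * x i) • g + (∑ i ∈ s, c i * r i) • h := by
  simp only [smul_add, smul_smul, Finset.sum_add_distrib, Finset.sum_smul]

theorem eq_of_smul_add_smul_sub_eq_smul {R M : Type*} [Ring R] [AddCommGroup M] [Module R M]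
    {g h : M} (hind : ∀ a c : R, a • g + c • h = 0 → a = 0) {x y r s w : R}
    (hrel : x • g + r • h - (y • g + s • h) = w • h) : x = y := by
  refine sub_eq_zero.mp (hind (x - y) (r - s - w) ?_)
  calc (x - y) • g + (r - s - w) • h
      = x • g + r • h - (y • g + s • h) - w • h := by
        simp only [sub_smul]; abel
    _ = 0 := sub_eq_zero.mpr hrel

theorem sum_mul_pow_lt_pow {b m : ℕ} {d : Fin m → ℕ} (hd : ∀ i, d i < b) :
    ∑ i : Fin m, d i * b ^ (i : ℕ) < b ^ m := by
  simpa only [finFunctionFinEquiv_apply] using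
    (finFunctionFinEquiv fun i => (⟨d i, hd i⟩ : Fin b)).isLt

theorem zkpNN_sound_general {R M : Type*} [Ring R] [AddCommGroup M] [Module R M] {g h : M}
    (hind : ∀ a c : R, a • g + c • h = 0 → a = 0) {b m : ℕ} {x r w : R}
    {d : Fin m → ℕ} (hd : ∀ i, d i < b) {ρ : Fin m → R}
    (hrel : ∑ i : Fin m, (b ^ (i : ℕ) : R) • ((d i : R) • g + ρ i • h) - (x • g + r • h)
      = w • h) :
    x = ((∑ i : Fin m, d i * b ^ (i : ℕ) : ℕ) : R) ∧ ∑ i : Fin m, d i * b ^ (i : ℕ) < b ^ m := by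
  refine ⟨?_, sum_mul_pow_lt_pow hd⟩
  have cast_value : ((∑ i : Fin m, d i * b ^ (i : ℕ) : ℕ) : R) =
      ∑ i : Fin m, (b ^ (i : ℕ) : R) * d i := by
    simp only [mul_comm (d _), Nat.cast_sum, Nat.cast_mul, Nat.cast_pow]
  rw [sum_smul_smul_add_smul, ← cast_value] at hrel
  exact (eq_of_smul_add_smul_sub_eq_smul hind hrel).symm

/-- Soundness of zkpNN under independence of the generators: the extracted relation
forces the committed value to be the image of a natural number `N < 2^m`. -/
theorem zkpNN_sound (p : ℕ) [Fact p.Prime] {G : Type*} [AddCommGroup G]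
    [Module (ZMod p) G] (g h : G)
    (hind : ∀ a b : ZMod p, a • g + b • h = 0 → a = 0 ∧ b = 0)
    (m : ℕ) (x r : ZMod p) (C : G) (hC : C = Cm p g h x r)
    (bits : Fin m → ℕ) (hbits : ∀ i, bits i = 0 ∨ bits i = 1)
    (ρ : Fin m → ZMod p) (B : Fin m → G)
    (hB : ∀ i, B i = Cm p g h ((bits i : ZMod p)) (ρ i))
    (w : ZMod p)
    (hrel : ∑ i : Fin m, (2 ^ (i : ℕ) : ZMod p) • B i - C = w • h) :
    x = ((∑ i : Fin m, bits i * 2 ^ (i : ℕ) : ℕ) : ZMod p) ∧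
      (∑ i : Fin m, bits i * 2 ^ (i : ℕ)) < 2 ^ m := by
  exact zkpNN_sound_general (b := 2) (fun a c hac => (hind a c hac).1)
    (fun i => Nat.lt_succ_of_le (Nat.le_one_iff_eq_zero_or_eq_one.mpr (hbits i)))
    (by simpa only [Nat.cast_ofNat, hB, hC, Cm] using hrel)
end
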